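/- Let v be a norm on ℝ^n invariant under coordinate permutations, let X be an n×n positive definite Hermitian matrix, and let S be a Hermitian n×n matrix. Then the curve γ(t) := X^{1/2} e^{tS} X^{1/2} satisfies d_v(γ(s), γ(t)) = |s − t| · ‖S‖_v for all s, t ∈ ℝ; that is, γ is a geodesic for the metric d_v (up to the constant speed ‖S‖_v). -/

import Mathlib

noncomputable section
open scoped Classical
open Matrix
open scoped ComplexOrder

/-- `v(λ(H))` for Hermitian `H` (junk value `0` otherwise). -/
def vnorm {n : ℕ} (v : (Fin n → ℝ) → ℝ) (H : Matrix (Fin n) (Fin n) ℂ) : ℝ :=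
  if h : H.IsHermitian then v h.eigenvalues else 0

/-- The positive semidefinite square root of a positive semidefinite matrix
(the definition of the older Mathlib, since removed). -/
def Matrix.PosSemidef.sqrt {n 𝕜 : Type*} [Fintype n] [RCLike 𝕜] [DecidableEq n]
    {A : Matrix n n 𝕜} (hA : A.PosSemidef) : Matrix n n 𝕜 :=
  hA.1.eigenvectorUnitary.1 * Matrix.diagonal ((↑) ∘ Real.sqrt ∘ hA.1.eigenvalues) *
  (star hA.1.eigenvectorUnitary : Matrix n n 𝕜)

/-- The positive semidefinite square root (junk value `0` off PSD matrices). -/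
def matSqrt {n : ℕ} (X : Matrix (Fin n) (Fin n) ℂ) : Matrix (Fin n) (Fin n) ℂ :=
  if h : X.PosSemidef then h.sqrt else 0

/-- The Hermitian logarithm of a positive definite matrix, via the spectral
decomposition (junk value `0` off Hermitian matrices). -/
def mlog {n : ℕ} (X : Matrix (Fin n) (Fin n) ℂ) : Matrix (Fin n) (Fin n) ℂ :=
  if h : X.IsHermitian then
    (h.eigenvectorUnitary : Matrix (Fin n) (Fin n) ℂ) *
      Matrix.diagonal (fun i => (Real.log (h.eigenvalues i) : ℂ)) *
      (star h.eigenvectorUnitary : Matrix (Fin n) (Fin n) ℂ)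
  else 0

/-- The invariant Finsler distance `d_v(X,Y) = ‖log (X^{-1/2} Y X^{-1/2})‖_v`. -/
def dv {n : ℕ} (v : (Fin n → ℝ) → ℝ) (X Y : Matrix (Fin n) (Fin n) ℂ) : ℝ :=
  vnorm v (mlog ((matSqrt X)⁻¹ * Y * (matSqrt X)⁻¹))

theorem aux_perm {n : ℕ} (f g : Fin n → ℝ)
    (h : Multiset.map f Finset.univ.val = Multiset.map g Finset.univ.val) :
    ∃ σ : Equiv.Perm (Fin n), f = g ∘ σ := by
  have hp : (List.ofFn f).Perm (List.ofFn g) := by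
    rw [Fin.univ_val_map, Fin.univ_val_map] at h
    exact Multiset.coe_eq_coe.mp h
  have h1 := Equiv.Perm.ofFn_comp_perm (Tuple.sort f) f
  have h2 := Equiv.Perm.ofFn_comp_perm (Tuple.sort g) g
  have hpp := (h1.trans hp).trans h2.symm
  have hf := (Tuple.monotone_sort f).sortedLE_ofFn
  have hg := (Tuple.monotone_sort g).sortedLE_ofFn
  have he : List.ofFn (f ∘ Tuple.sort f) = List.ofFn (g ∘ Tuple.sort g) :=
    hpp.eq_of_pairwise' hf.pairwise hg.pairwise
  have he2 : f ∘ Tuple.sort f = g ∘ Tuple.sort g := List.ofFn_injective he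
  refine ⟨(Tuple.sort f).symm.trans (Tuple.sort g), ?_⟩
  funext i
  have := congrFun he2 ((Tuple.sort f).symm i)
  simpa using this

theorem aux_eig {n : ℕ} (H : Matrix (Fin n) (Fin n) ℂ) (h : H.IsHermitian) (d : Fin n → ℝ)
    (hc : H.charpoly = (Matrix.diagonal (fun i => (d i : ℂ))).charpoly) :
    ∃ σ : Equiv.Perm (Fin n), h.eigenvalues = d ∘ σ := by
  apply aux_perm
  have h1 := h.roots_charpoly_eq_eigenvalues
  have h2 : (Matrix.diagonal (fun i => (d i : ℂ))).charpoly.roots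
      = Multiset.map (fun i => (d i : ℂ)) Finset.univ.val := by
    rw [Matrix.charpoly_diagonal, Polynomial.roots_prod]
    · simp
    · simp [Finset.prod_ne_zero_iff, Polynomial.X_sub_C_ne_zero]
  rw [hc, h2] at h1
  have h3 := congrArg (Multiset.map Complex.re) h1
  simp only [Multiset.map_map] at h3
  simpa [Function.comp_def] using h3.symm

theorem aux_conj_charpoly {n : ℕ} (U : Matrix.unitaryGroup (Fin n) ℂ)
    (D : Matrix (Fin n) (Fin n) ℂ) :
    ((U : Matrix (Fin n) (Fin n) ℂ) * D * (star U : Matrix (Fin n) (Fin n) ℂ)).charpoly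
      = D.charpoly := by
  rw [Matrix.charpoly_mul_comm, ← mul_assoc, Unitary.coe_star_mul_self, one_mul]

theorem aux_conj_herm {n : ℕ} (U : Matrix (Fin n) (Fin n) ℂ) (d : Fin n → ℝ) :
    (U * Matrix.diagonal (fun i => (d i : ℂ)) * star U).IsHermitian := by
  have : (Matrix.diagonal (fun i => (d i : ℂ))).IsHermitian := by
    apply Matrix.isHermitian_diagonal_of_self_adjoint
    ext i; simp
  exact Matrix.isHermitian_mul_mul_conjTranspose U this

theorem aux_sqrt {n : ℕ} (X : Matrix (Fin n) (Fin n) ℂ) (h : X.PosSemidef) :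
    (matSqrt X).IsHermitian ∧ matSqrt X * matSqrt X = X := by
  unfold matSqrt
  rw [dif_pos h]
  unfold Matrix.PosSemidef.sqrt
  refine ⟨aux_conj_herm _ _, ?_⟩
  have hs := h.1.spectral_theorem
  rw [Unitary.conjStarAlgAut_apply] at hs
  conv_rhs => rw [hs]
  have hU := Unitary.coe_star_mul_self h.1.eigenvectorUnitary
  set U : Matrix (Fin n) (Fin n) ℂ := (h.1.eigenvectorUnitary : Matrix (Fin n) (Fin n) ℂ)
  have hD : Matrix.diagonal (((↑) : ℝ → ℂ) ∘ Real.sqrt ∘ h.1.eigenvalues) *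
      Matrix.diagonal (((↑) : ℝ → ℂ) ∘ Real.sqrt ∘ h.1.eigenvalues)
      = Matrix.diagonal (((↑) : ℝ → ℂ) ∘ h.1.eigenvalues) := by
    rw [Matrix.diagonal_mul_diagonal]
    congr 1
    funext i
    simp only [Function.comp_apply]
    rw [← Complex.ofReal_mul, Real.mul_self_sqrt (h.eigenvalues_nonneg i)]
  calc _ = U * Matrix.diagonal (((↑) : ℝ → ℂ) ∘ Real.sqrt ∘ h.1.eigenvalues) * (star U * U) *
      Matrix.diagonal (((↑) : ℝ → ℂ) ∘ Real.sqrt ∘ h.1.eigenvalues) * star U := by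
        simp only [mul_assoc]; rfl
    _ = U * (Matrix.diagonal (((↑) : ℝ → ℂ) ∘ Real.sqrt ∘ h.1.eigenvalues) *
      Matrix.diagonal (((↑) : ℝ → ℂ) ∘ Real.sqrt ∘ h.1.eigenvalues)) * star U := by
        rw [hU]; simp only [mul_assoc, mul_one]
    _ = _ := by rw [hD]; rfl

theorem aux_exp_charpoly {n : ℕ} (S : Matrix (Fin n) (Fin n) ℂ) (hS : S.IsHermitian) (r : ℝ) :
    (NormedSpace.exp (r • S)).charpoly
      = (Matrix.diagonal (fun i => ((Real.exp (r * hS.eigenvalues i) : ℝ) : ℂ))).charpoly := by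
  have hs := hS.spectral_theorem
  rw [Unitary.conjStarAlgAut_apply] at hs
  have hU := Unitary.coe_star_mul_self hS.eigenvectorUnitary
  have hUinv : (hS.eigenvectorUnitary : Matrix (Fin n) (Fin n) ℂ)⁻¹
      = star (hS.eigenvectorUnitary : Matrix (Fin n) (Fin n) ℂ) := Matrix.inv_eq_left_inv hU
  have hUu : IsUnit (hS.eigenvectorUnitary : Matrix (Fin n) (Fin n) ℂ) :=
    (Unitary.toUnits hS.eigenvectorUnitary).isUnit
  have key : r • S = (hS.eigenvectorUnitary : Matrix (Fin n) (Fin n) ℂ) *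
      Matrix.diagonal (fun i => ((r * hS.eigenvalues i : ℝ) : ℂ)) *
      (hS.eigenvectorUnitary : Matrix (Fin n) (Fin n) ℂ)⁻¹ := by
    rw [hUinv]
    conv_lhs => rw [hs]
    rw [← Matrix.smul_mul, ← Matrix.mul_smul, ← Matrix.diagonal_smul]
    congr 3
    congr 1
    funext i
    simp
  rw [key, Matrix.exp_conj _ _ hUu, Matrix.exp_diagonal, hUinv]
  erw [aux_conj_charpoly]
  congr 2
  funext i
  rw [Pi.coe_exp, ← Complex.exp_eq_exp_ℂ, Complex.ofReal_exp]

theorem aux_vnorm {n : ℕ} (v : (Fin n → ℝ) → ℝ)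
    (hv_perm : ∀ (σ : Equiv.Perm (Fin n)) (x : Fin n → ℝ), v (x ∘ σ) = v x)
    (Z : Matrix (Fin n) (Fin n) ℂ) (hZ : Z.IsHermitian) (d : Fin n → ℝ)
    (hc : Z.charpoly = (Matrix.diagonal (fun i => ((Real.exp (d i) : ℝ) : ℂ))).charpoly) :
    vnorm v (mlog Z) = v d := by
  obtain ⟨σ, hσ⟩ := aux_eig Z hZ _ hc
  unfold mlog
  rw [dif_pos hZ]
  have hH := aux_conj_herm (hZ.eigenvectorUnitary : Matrix (Fin n) (Fin n) ℂ)
    (fun i => Real.log (hZ.eigenvalues i))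
  obtain ⟨τ, hτ⟩ := aux_eig _ hH _ (aux_conj_charpoly hZ.eigenvectorUnitary _)
  unfold vnorm
  erw [dif_pos hH]
  rw [hτ, hv_perm, hσ]
  simp only [Function.comp_apply, Real.log_exp]
  exact hv_perm σ d

theorem aux_smul_herm {n : ℕ} (S : Matrix (Fin n) (Fin n) ℂ) (hS : S.IsHermitian) (r : ℝ) :
    (r • S).IsHermitian := by
  unfold Matrix.IsHermitian
  rw [Matrix.conjTranspose_smul, hS.eq]; simp

theorem aux_exp_add {n : ℕ} (S : Matrix (Fin n) (Fin n) ℂ) (a b : ℝ) :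
    NormedSpace.exp (a • S) * NormedSpace.exp (b • S) = NormedSpace.exp ((a + b) • S) := by
  rw [add_smul, Matrix.exp_add_of_commute]
  exact ((Commute.refl S).smul_left a).smul_right b

/-- The curve `t ↦ X^{1/2} e^{tS} X^{1/2}` is a constant-speed geodesic for `d_v`:
`d_v(γ(s), γ(t)) = |s - t| ⬝ ‖S‖_v`. -/
theorem exp_curve_is_geodesic {n : ℕ} (v : (Fin n → ℝ) → ℝ)
    (hv_eq0 : ∀ x, v x = 0 ↔ x = 0)
    (hv_smul : ∀ (c : ℝ) (x : Fin n → ℝ), v (c • x) = |c| * v x)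
    (hv_add : ∀ x y, v (x + y) ≤ v x + v y)
    (hv_perm : ∀ (σ : Equiv.Perm (Fin n)) (x : Fin n → ℝ), v (x ∘ σ) = v x)
    (X S : Matrix (Fin n) (Fin n) ℂ) (hX : X.PosDef) (hS : S.IsHermitian)
    (s t : ℝ) :
    dv v (matSqrt X * NormedSpace.exp (s • S) * matSqrt X)
        (matSqrt X * NormedSpace.exp (t • S) * matSqrt X)
      = |s - t| * vnorm v S := by
  obtain ⟨hMh, hMM⟩ := aux_sqrt X hX.posSemidef
  have hMu : IsUnit (matSqrt X) := by
    have h1 := hX.isUnit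
    rw [Matrix.isUnit_iff_isUnit_det] at h1 ⊢
    rw [← hMM, Matrix.det_mul] at h1
    exact isUnit_of_mul_isUnit_left h1
  generalize matSqrt X = M at hMh hMu ⊢
  have hE : ∀ r : ℝ, (NormedSpace.exp (r • S)).IsHermitian :=
    fun r => (aux_smul_herm S hS r).exp
  have hB : ∀ r : ℝ, (M * NormedSpace.exp (r • S) * M).IsHermitian := fun r => by
    have := Matrix.isHermitian_mul_mul_conjTranspose M (hE r)
    rwa [hMh.eq] at this
  have hA : (M * NormedSpace.exp (s • S) * M).PosSemidef := by
    have h1 := Matrix.posSemidef_self_mul_conjTranspose (M * NormedSpace.exp ((s / 2) • S))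
    rw [Matrix.conjTranspose_mul, hMh.eq, (hE _).eq] at h1
    have h2 := aux_exp_add S (s / 2) (s / 2)
    rw [add_halves] at h2
    rw [← h2]
    simpa only [mul_assoc] using h1
  obtain ⟨hRh, hRR⟩ := aux_sqrt _ hA
  have hAu : IsUnit (M * NormedSpace.exp (s • S) * M) :=
    (hMu.mul (Matrix.isUnit_exp _)).mul hMu
  unfold dv
  generalize matSqrt (M * NormedSpace.exp (s • S) * M) = R at hRh hRR ⊢
  have hZ : (R⁻¹ * (M * NormedSpace.exp (t • S) * M) * R⁻¹).IsHermitian := by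
    have := Matrix.isHermitian_mul_mul_conjTranspose R⁻¹ (hB t)
    rwa [hRh.inv.eq] at this
  have hMdet := (Matrix.isUnit_iff_isUnit_det _).mp hMu
  have hinv : (M * NormedSpace.exp (s • S) * M)⁻¹
      = M⁻¹ * NormedSpace.exp ((-s) • S) * M⁻¹ := by
    apply Matrix.inv_eq_left_inv
    calc _ = M⁻¹ * NormedSpace.exp ((-s) • S) * (M⁻¹ * M) * NormedSpace.exp (s • S) * M := by
          simp only [mul_assoc]
      _ = M⁻¹ * (NormedSpace.exp ((-s) • S) * NormedSpace.exp (s • S)) * M := by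
          rw [Matrix.nonsing_inv_mul _ hMdet]; simp only [mul_assoc, one_mul, mul_one]
      _ = 1 := by
          rw [aux_exp_add]; simp [Matrix.nonsing_inv_mul _ hMdet]
  have hc : (R⁻¹ * (M * NormedSpace.exp (t • S) * M) * R⁻¹).charpoly
      = (NormedSpace.exp ((t - s) • S)).charpoly := by
    rw [Matrix.charpoly_mul_comm, ← mul_assoc, ← Matrix.mul_inv_rev, hRR, hinv]
    calc _ = (M⁻¹ * NormedSpace.exp ((-s) • S) * (M⁻¹ * M) *
              NormedSpace.exp (t • S) * M).charpoly := by simp only [mul_assoc]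
      _ = (M⁻¹ * (NormedSpace.exp ((-s) • S) * NormedSpace.exp (t • S)) * M).charpoly := by
          rw [Matrix.nonsing_inv_mul _ hMdet]; simp only [mul_assoc, mul_one, one_mul]
      _ = _ := by
          rw [aux_exp_add, Matrix.charpoly_mul_comm, ← mul_assoc,
            Matrix.mul_nonsing_inv _ hMdet, one_mul, neg_add_eq_sub]
  rw [aux_exp_charpoly S hS] at hc
  rw [aux_vnorm v hv_perm _ hZ _ hc]
  unfold vnorm
  rw [dif_pos hS, abs_sub_comm, ← hv_smul]
  rfl
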